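/- arXiv:2604.26901 — 2 statements merged into one kernel-verified Lean document; each statement's English description precedes it below -/
import Mathlib

section
/- If H and K are cancellative monoids, then every isomorphism f from P_1(H) to P_1(K) maps the finite subsets of H containing the identity bijectively onto the finite subsets of K containing the identity; that is, f restricts to an isomorphism from P_fin,1(H) to P_fin,1(K). -/
open Pointwise

/-- The reduced large power monoid: subsets of a monoid `H` containing the identity,
under setwise multiplication. -/
def P1 (H : Type*) [Monoid H] : Type _ := {X : Set H // (1 : H) ∈ X}

noncomputable instance {H : Type*} [Monoid H] : Mul (P1 H) :=
  ⟨fun X Y => ⟨X.1 * Y.1, by simpa using Set.mul_mem_mul X.2 Y.2⟩⟩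

theorem P1.val_mul {H : Type*} [Monoid H] (X Y : P1 H) : (X * Y).1 = X.1 * Y.1 := rfl

/-- `X` is finite iff its cube has finitely many left divisors. -/
theorem P1.finite_iff {H : Type*} [CancelMonoid H] (X : P1 H) :
    X.1.Finite ↔ {A : P1 H | ∃ B, A * B = X * X * X}.Finite := by
  constructor
  · intro h
    have h3 : (X * X * X).1.Finite := by
      rw [P1.val_mul, P1.val_mul]
      exact (h.mul h).mul h
    refine Set.Finite.of_finite_image (f := fun A : P1 H => A.1)
      (h3.finite_subsets.subset ?_) (fun A _ B _ hAB => Subtype.ext hAB)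
    rintro _ ⟨A, ⟨B, hB⟩, rfl⟩ a ha
    rw [← hB]
    exact ⟨a, ha, 1, B.2, mul_one a⟩
  · intro h
    by_contra hX
    have hX' : (X.1 \ {1}).Infinite := Set.Infinite.sdiff hX (Set.finite_singleton 1)
    have h1 : (1 : H) ∈ X.1 * X.1 := (X * X).2
    have hsub : X.1 ⊆ X.1 * X.1 := fun a ha => ⟨a, ha, 1, X.2, mul_one a⟩
    classical
    let g : H → P1 H := fun x =>
      if hx : x = 1 then X else ⟨(X.1 * X.1) \ {x}, h1, fun e => hx e.symm⟩
    have hg : ∀ x, x ≠ 1 → (g x).1 = (X.1 * X.1) \ {x} := by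
      intro x hx
      simp [g, hx]
    refine hX' (Set.Finite.of_finite_image (f := g) (h.subset ?_) ?_)
    · rintro _ ⟨x, ⟨hxX, hx1⟩, rfl⟩
      have hx1 : x ≠ 1 := hx1
      refine ⟨X, Subtype.ext ?_⟩
      rw [P1.val_mul, P1.val_mul, P1.val_mul, hg x hx1]
      apply Set.Subset.antisymm (Set.mul_subset_mul_right Set.diff_subset)
      rintro _ ⟨p, hp, c, hc, rfl⟩
      by_cases hpx : p = x
      · subst hpx
        by_cases hc1 : c = 1
        · subst hc1
          exact ⟨1, ⟨h1, fun e => hx1 e.symm⟩, p, hxX, by simp⟩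
        · refine ⟨p * c, ⟨⟨p, hxX, c, hc, rfl⟩, ?_⟩, 1, X.2, by simp⟩
          intro e
          exact hc1 (mul_eq_left.mp e)
      · exact ⟨p, ⟨hp, hpx⟩, c, hc, rfl⟩
    · rintro x ⟨hxX, hx1⟩ y ⟨hyX, hy1⟩ hxy
      by_contra hne
      have hv : (g x).1 = (g y).1 := by rw [hxy]
      rw [hg x hx1, hg y hy1] at hv
      have : x ∈ (X.1 * X.1) \ {y} := ⟨hsub hxX, hne⟩
      rw [← hv] at this
      exact this.2 rfl

/-- If `H` and `K` are cancellative monoids, every isomorphism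
`f : P_1(H) → P_1(K)` maps the finite subsets of `H` containing `1` bijectively onto the
finite subsets of `K` containing `1`: since `f` is a bijection, this is equivalent to
`X` being finite iff `f X` is finite. -/
theorem stmt3 {H K : Type*} [CancelMonoid H] [CancelMonoid K] (f : P1 H ≃* P1 K) :
    ∀ X : P1 H, X.1.Finite ↔ (f X).1.Finite := by
  intro X
  rw [P1.finite_iff, P1.finite_iff]
  have : {A : P1 K | ∃ B, A * B = f X * f X * f X}
      = f '' {A : P1 H | ∃ B, A * B = X * X * X} := by
    ext A
    constructor
    · rintro ⟨B, hB⟩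
      refine ⟨f.symm A, ⟨f.symm B, f.injective ?_⟩, by simp⟩
      simp only [map_mul, MulEquiv.apply_symm_apply, hB]
    · rintro ⟨A, ⟨B, hB⟩, rfl⟩
      exact ⟨f B, by rw [← map_mul, hB, map_mul, map_mul]⟩
  rw [this, Set.finite_image_iff f.injective.injOn]
end

section
/- For every numerical monoid H, the automorphism group of the reduced large power monoid P_0(H) is trivial; that is, the only automorphism of P_0(H) is the identity. -/
open Pointwise

/-- A numerical monoid: a cofinite additive submonoid of `ℕ` containing `0`. -/
structure NumMonoid where
  carrier : Set ℕ
  zero_mem : 0 ∈ carrier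
  add_mem : ∀ {a b : ℕ}, a ∈ carrier → b ∈ carrier → a + b ∈ carrier
  cofinite : carrierᶜ.Finite

/-- The reduced large power monoid of a numerical monoid `H`: subsets of `H` containing
`0`, under sumset addition. -/
def P0 (H : NumMonoid) : Type := {X : Set ℕ // 0 ∈ X ∧ X ⊆ H.carrier}

noncomputable instance (H : NumMonoid) : Add (P0 H) :=
  ⟨fun X Y => ⟨X.1 + Y.1, by simpa using Set.add_mem_add X.2.1 Y.2.1, by
    rintro z ⟨a, ha, b, hb, rfl⟩
    exact H.add_mem (X.2.2 ha) (Y.2.2 hb)⟩⟩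

namespace PZ

theorem ext' {H : NumMonoid} {X Y : P0 H} (h : ∀ x, x ∈ X.1 ↔ x ∈ Y.1) : X = Y :=
  Subtype.ext (Set.ext h)

theorem mem_add' {H : NumMonoid} {X Y : P0 H} {z : ℕ} :
    z ∈ (X + Y).1 ↔ ∃ x ∈ X.1, ∃ y ∈ Y.1, x + y = z := Iff.rfl

theorem left_sub {H : NumMonoid} (X Y : P0 H) : X.1 ⊆ (X + Y).1 :=
  fun x hx => ⟨x, hx, 0, Y.2.1, rfl⟩

theorem right_sub {H : NumMonoid} (X Y : P0 H) : Y.1 ⊆ (X + Y).1 :=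
  fun x hx => ⟨0, X.2.1, x, hx, Nat.zero_add x⟩

theorem absorb {H : NumMonoid} {A B : P0 H} (hB : B + B = B) :
    A + B = B ↔ A.1 ⊆ B.1 := by
  constructor
  · intro h
    have := left_sub A B
    rwa [h] at this
  · intro h
    apply ext'
    intro x
    constructor
    · rintro ⟨a, ha, b, hb, rfl⟩
      rw [← hB]
      exact ⟨a, h ha, b, hb, rfl⟩
    · exact fun hx => right_sub A B hx

theorem idem_of {H : NumMonoid} {B : P0 H}
    (h : ∀ x ∈ B.1, ∀ y ∈ B.1, x + y ∈ B.1) : B + B = B := by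
  apply ext'
  intro x
  constructor
  · rintro ⟨a, ha, b, hb, rfl⟩
    exact h a ha b hb
  · exact fun hx => right_sub B B hx

theorem idem_map {H : NumMonoid} (f : P0 H ≃+ P0 H) {B : P0 H} (hB : B + B = B) :
    f B + f B = f B := by rw [← map_add, hB]

theorem sub_iff {H : NumMonoid} (f : P0 H ≃+ P0 H) {A B : P0 H} (hB : B + B = B) :
    (f A).1 ⊆ (f B).1 ↔ A.1 ⊆ B.1 := by
  rw [← absorb hB, ← absorb (idem_map f hB), ← map_add, f.injective.eq_iff]

/-- the submonoid of elements of `H` that are zero or at least `m` -/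
def S (H : NumMonoid) (m : ℕ) : P0 H :=
  ⟨{x | x ∈ H.carrier ∧ (x = 0 ∨ m ≤ x)}, ⟨H.zero_mem, Or.inl rfl⟩, fun _ hx => hx.1⟩

theorem mem_S {H : NumMonoid} {m x : ℕ} :
    x ∈ (S H m).1 ↔ x ∈ H.carrier ∧ (x = 0 ∨ m ≤ x) := Iff.rfl

theorem S_idem (H : NumMonoid) (m : ℕ) : S H m + S H m = S H m := by
  apply idem_of
  rintro x ⟨hx, hx'⟩ y ⟨hy, hy'⟩
  exact ⟨H.add_mem hx hy, by omega⟩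

theorem mem_add_S {H : NumMonoid} (X : P0 H) (m x : ℕ) :
    x ∈ (X + S H m).1 ↔ x ∈ X.1 ∨ (x ∈ H.carrier ∧ m ≤ x) := by
  constructor
  · rintro ⟨a, ha, b, ⟨hb, hb'⟩, rfl⟩
    rcases hb' with rfl | hb'
    · left; exact ha
    · right; exact ⟨H.add_mem (X.2.2 ha) hb, le_add_left hb'⟩
  · rintro (h | h)
    · exact left_sub _ _ h
    · exact right_sub _ _ ⟨h.1, Or.inr h.2⟩

theorem mem_char {H : NumMonoid} (X : P0 H) {m : ℕ} (hm : m ∈ H.carrier) :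
    X + S H (m + 1) = X + S H m ↔ m ∈ X.1 := by
  constructor
  · intro h
    have h2 : m ∈ (X + S H m).1 := (mem_add_S _ _ _).2 (Or.inr ⟨hm, le_rfl⟩)
    rw [← h, mem_add_S] at h2
    rcases h2 with h2 | h2
    · exact h2
    · omega
  · intro h
    apply ext'
    intro x
    rw [mem_add_S, mem_add_S]
    constructor
    · rintro (h1 | h1)
      · exact Or.inl h1
      · exact Or.inr ⟨h1.1, by omega⟩
    · rintro (h1 | h1)
      · exact Or.inl h1
      · by_cases hx : x = m
        · subst hx; exact Or.inl h
        · exact Or.inr ⟨h1.1, by omega⟩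

theorem eq_id_of_S {H : NumMonoid} (f : P0 H ≃+ P0 H) (h : ∀ m, f (S H m) = S H m)
    (X : P0 H) : f X = X := by
  apply ext'
  intro m
  by_cases hm : m ∈ H.carrier
  · rw [← mem_char _ hm, ← mem_char X hm]
    conv_lhs => rw [← h (m + 1), ← h m, ← map_add, ← map_add, f.injective.eq_iff]
  · exact ⟨fun h => absurd ((f X).2.2 h) hm, fun h => absurd (X.2.2 h) hm⟩

/-- the full monoid -/
def NN : NumMonoid := ⟨Set.univ, trivial, fun _ _ => trivial, by simp⟩

theorem S_between {H : NumMonoid} {m : ℕ} {T : P0 H} (h1 : (S H (m + 1)).1 ⊆ T.1)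
    (h2 : T.1 ⊆ (S H m).1) : T = S H (m + 1) ∨ T = S H m := by
  by_cases hm : m ∈ T.1
  · right
    apply ext'
    intro x
    refine ⟨fun h => h2 h, fun h => ?_⟩
    by_cases hx : x = m
    · rwa [hx]
    · exact h1 ⟨h.1, by have := h.2; omega⟩
  · left
    apply ext'
    intro x
    refine ⟨fun h => ?_, fun h => h1 h⟩
    have := h2 h
    refine ⟨this.1, ?_⟩
    have h3 := this.2
    have : x ≠ m := fun e => hm (e ▸ h)
    omega

theorem S_mono (H : NumMonoid) (m : ℕ) : (S H (m + 1)).1 ⊆ (S H m).1 :=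
  fun _ hx => ⟨hx.1, by have := hx.2; omega⟩

theorem NN_S (g : P0 NN ≃+ P0 NN) (m : ℕ) : g (S NN m) = S NN m := by
  induction m with
  | zero =>
    apply ext'
    intro x
    refine ⟨fun _ => ⟨trivial, Or.inr (Nat.zero_le _)⟩, ?_⟩
    intro hx
    have : (g (g.symm (S NN 0))).1 ⊆ (g (S NN 0)).1 := by
      rw [sub_iff g (S_idem _ _)]
      exact fun _ _ => ⟨trivial, Or.inr (Nat.zero_le _)⟩
    rw [g.apply_symm_apply] at this
    exact this hx
  | succ m ih =>
    by_cases hm0 : m = 0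
    · subst hm0
      have : S NN (0 + 1) = S NN 0 := by
        apply ext'
        intro x
        rw [mem_S, mem_S]
        constructor
        · exact fun h => ⟨trivial, by omega⟩
        · exact fun h => ⟨trivial, by omega⟩
      rw [this, ih]
    have hne : S NN (m + 1) ≠ S NN m := by
      intro h
      have : m ∈ (S NN m).1 := ⟨trivial, Or.inr le_rfl⟩
      rw [← h] at this
      have := this.2
      omega
    have hsub : (g (S NN (m + 1))).1 ⊆ (S NN m).1 := by
      rw [← ih, sub_iff g (S_idem _ _)]
      exact S_mono _ _
    have hidem := idem_map g (S_idem NN (m + 1))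
    have hcov : ∀ T : P0 NN, T + T = T → (g (S NN (m + 1))).1 ⊆ T.1 → T.1 ⊆ (S NN m).1 →
        T = g (S NN (m + 1)) ∨ T = S NN m := by
      intro T hT h1 h2
      obtain ⟨T, rfl⟩ := g.surjective T
      have hT' : T + T = T := by
        apply g.injective
        rw [map_add, hT]
      rw [sub_iff g hT'] at h1
      rw [← ih, sub_iff g (S_idem _ _)] at h2
      rcases S_between h1 h2 with h | h
      · left; rw [h]
      · right; rw [h, ih]
    have hprop : ∀ X : P0 NN, X + S NN m = X → ∃ Y : P0 NN, Y ≠ X ∧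
        Y + g (S NN (m + 1)) = Y ∧ Y + S NN m = X := by
      intro X hX
      obtain ⟨X, rfl⟩ := g.surjective X
      have hX' : X + S NN m = X := by
        apply g.injective
        rw [map_add, ih, hX]
      have key : ∃ Y : P0 NN, Y ≠ X ∧ Y + S NN (m + 1) = Y ∧ Y + S NN m = X := by
        have hup : ∀ x, m ≤ x → x ∈ X.1 := by
          intro x hx
          rw [← hX', mem_add_S]
          exact Or.inr ⟨trivial, hx⟩
        refine ⟨⟨{x | x ∈ X.1 ∧ x ≠ m}, ⟨X.2.1, Ne.symm hm0⟩, fun _ _ => trivial⟩, ?_, ?_, ?_⟩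
        · intro h
          have h2 := hup m le_rfl
          rw [← h] at h2
          exact h2.2 rfl
        · apply ext'
          intro x
          refine (mem_add_S _ _ _).trans ?_
          constructor
          · rintro (h | h)
            · exact h
            · exact ⟨hup x (by omega), by omega⟩
          · exact Or.inl
        · apply ext'
          intro x
          refine (mem_add_S _ _ _).trans ?_
          constructor
          · rintro (h | h)
            · exact h.1
            · exact hup x h.2
          · intro h
            by_cases hx : m ≤ x
            · exact Or.inr ⟨trivial, hx⟩
            · exact Or.inl ⟨h, by omega⟩
      obtain ⟨Y, h1, h2, h3⟩ := key
      refine ⟨g Y, fun h => h1 (g.injective h), by rw [← map_add, h2], ?_⟩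
      rw [← h3, map_add, ih]
    have hneS : g (S NN (m + 1)) ≠ S NN m := by
      intro h
      apply hne
      apply g.injective
      rw [h, ih]
    generalize g (S NN (m + 1)) = U at *
    by_cases hmU : m ∈ U.1
    · exfalso
      obtain ⟨a, haS, haU⟩ : ∃ a, a ∈ (S NN m).1 ∧ a ∉ U.1 := by
        by_contra hcon
        push Not at hcon
        exact hneS (ext' fun x => ⟨fun h => hsub h, fun h => hcon x h⟩)
      have huniq : ∀ a, a ∈ (S NN m).1 → a ∉ U.1 → ∀ x, a < x → x ∈ U.1 := by
        intro a haS haU x hx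
        have ha0 : a ≠ 0 := fun h => haU (h ▸ U.2.1)
        have := hcov (U + S NN (a + 1)) ?_ (left_sub _ _) ?_
        · rcases this with h | h
          · rw [← h, mem_add_S]
            exact Or.inr ⟨trivial, hx⟩
          · rw [← h, mem_add_S] at haS
            rcases haS with h | h
            · exact absurd h haU
            · omega
        · apply idem_of
          intro x hx y hy
          rw [mem_add_S] at *
          rcases hx with hx | hx
          · rcases hy with hy | hy
            · left
              rw [← hidem]
              exact ⟨x, hx, y, hy, rfl⟩
            · exact Or.inr ⟨trivial, by omega⟩
          · exact Or.inr ⟨trivial, by omega⟩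
        · intro x hx
          rw [mem_add_S] at hx
          rcases hx with hx | hx
          · exact hsub hx
          · have := haS.2
            exact ⟨trivial, by omega⟩
      have hall : ∀ x, x ∈ (S NN m).1 → x ≠ a → x ∈ U.1 := by
        intro x hx hxa
        by_contra hxU
        rcases lt_or_gt_of_ne hxa with h | h
        · exact haU (huniq x hx hxU a h)
        · exact hxU (huniq a haS haU x h)
      have ha0 : a ≠ 0 := fun h => haU (h ▸ U.2.1)
      have ham : a ≠ m := fun h => haU (h ▸ hmU)
      have haS2 := haS.2
      have hu : a - m < m := by
        by_contra hcon
        have : a - m ∈ U.1 := hall _ ⟨trivial, by omega⟩ (by omega)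
        apply haU
        rw [← hidem]
        exact mem_add'.2 ⟨a - m, this, m, hmU, by omega⟩
      have hmemX : ∀ x, x ∈ ({x | x = a - m ∨ x ∈ (S NN m).1} : Set ℕ) ↔
        (x = a - m ∨ x ∈ (S NN m).1) := fun _ => Iff.rfl
      obtain ⟨Y, hY1, hY2, hY3⟩ := hprop
        ⟨{x | x = a - m ∨ x ∈ (S NN m).1}, Or.inr (S NN m).2.1, fun _ _ => trivial⟩ (by
          apply ext'
          intro x
          refine (mem_add_S _ _ _).trans ?_
          constructor
          · rintro (h | h)
            · exact h
            · exact Or.inr ⟨trivial, Or.inr h.2⟩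
          · exact Or.inl)
      apply hY1
      have huY : a - m ∈ Y.1 := by
        have : a - m ∈ (Y + S NN m).1 := by
          rw [hY3]
          exact Or.inl rfl
        rw [mem_add_S] at this
        rcases this with h | h
        · exact h
        · omega
      have haY : a ∈ Y.1 := by
        rw [← hY2]
        exact mem_add'.2 ⟨a - m, huY, m, hmU, by omega⟩
      apply ext'
      intro x
      constructor
      · intro hx
        rw [← hY3]
        exact left_sub _ _ hx
      · rintro (h | h)
        · rwa [h]
        · by_cases hxa : x = a
          · rwa [hxa]
          · rw [← hY2]
            exact right_sub _ _ (hall x h hxa)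
    · have hle : U.1 ⊆ (S NN (m + 1)).1 := by
        intro x hx
        have h1 := (hsub hx).2
        have h2 : x ≠ m := fun h => hmU (h ▸ hx)
        exact ⟨trivial, by omega⟩
      rcases hcov _ (S_idem NN (m + 1)) hle (S_mono _ _) with h | h
      · exact h.symm
      · exact absurd h hne

theorem NN_id (g : P0 NN ≃+ P0 NN) (X : P0 NN) : g X = X := eq_id_of_S g (NN_S g) X

theorem mul_mem' {H : NumMonoid} {a : ℕ} (ha : a ∈ H.carrier) (k : ℕ) : a * k ∈ H.carrier := by
  induction k with
  | zero => exact H.zero_mem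
  | succ k ih => exact H.add_mem ih ha

/-- scaling embedding -/
def e {H : NumMonoid} (a : ℕ) (ha : a ∈ H.carrier) (X : P0 NN) : P0 H :=
  ⟨{x | ∃ k ∈ X.1, a * k = x}, ⟨0, X.2.1, rfl⟩, by
    rintro x ⟨k, _, rfl⟩
    exact mul_mem' ha k⟩

theorem e_add {H : NumMonoid} (a : ℕ) (ha : a ∈ H.carrier) (X Y : P0 NN) :
    e a ha (X + Y) = e a ha X + e a ha Y := by
  apply ext'
  intro x
  constructor
  · rintro ⟨k, ⟨u, hu, v, hv, rfl⟩, rfl⟩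
    exact ⟨a * u, ⟨u, hu, rfl⟩, a * v, ⟨v, hv, rfl⟩, (mul_add a u v).symm⟩
  · rintro ⟨_, ⟨u, hu, rfl⟩, _, ⟨v, hv, rfl⟩, rfl⟩
    exact ⟨u + v, ⟨u, hu, v, hv, rfl⟩, mul_add a u v⟩

theorem e_inj {H : NumMonoid} {a : ℕ} (ha : a ∈ H.carrier) (h0 : a ≠ 0) {X Y : P0 NN}
    (h : e a ha X = e a ha Y) : X = Y := by
  have key : ∀ (Z : P0 NN) k, a * k ∈ (e a ha Z).1 ↔ k ∈ Z.1 := by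
    intro Z k
    constructor
    · rintro ⟨j, hj, hjk⟩
      rwa [← Nat.eq_of_mul_eq_mul_left (Nat.pos_of_ne_zero h0) hjk]
    · exact fun hk => ⟨k, hk, rfl⟩
  apply ext'
  intro k
  rw [← key X, ← key Y, h]

/-- full set -/
def top : P0 NN := ⟨Set.univ, trivial, fun _ _ => trivial⟩

/-- principal submonoid -/
def A {H : NumMonoid} (a : ℕ) (ha : a ∈ H.carrier) : P0 H := e a ha top

theorem mem_A {H : NumMonoid} {a : ℕ} {ha : a ∈ H.carrier} {x : ℕ} :
    x ∈ (A a ha).1 ↔ ∃ k, a * k = x := by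
  constructor
  · rintro ⟨k, _, h⟩; exact ⟨k, h⟩
  · rintro ⟨k, h⟩; exact ⟨k, trivial, h⟩

theorem A_idem {H : NumMonoid} (a : ℕ) (ha : a ∈ H.carrier) : A a ha + A a ha = A a ha := by
  apply idem_of
  intro x hx y hy
  rw [mem_A] at *
  obtain ⟨k, rfl⟩ := hx
  obtain ⟨l, rfl⟩ := hy
  exact ⟨k + l, mul_add _ _ _⟩

theorem A_sub {H : NumMonoid} {a : ℕ} {ha : a ∈ H.carrier} {B : P0 H} (hB : B + B = B) :
    (A a ha).1 ⊆ B.1 ↔ a ∈ B.1 := by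
  constructor
  · exact fun h => h (mem_A.2 ⟨1, mul_one a⟩)
  · intro h x hx
    rw [mem_A] at hx
    obtain ⟨k, rfl⟩ := hx
    induction k with
    | zero => exact B.2.1
    | succ k ih =>
      rw [← hB]
      exact ⟨a * k, ih, a, h, rfl⟩

theorem sub_A {H : NumMonoid} {a : ℕ} {ha : a ∈ H.carrier} {X : P0 H}
    (h : X.1 ⊆ (A a ha).1) : ∃ Y, e a ha Y = X := by
  refine ⟨⟨{k | a * k ∈ X.1}, X.2.1, fun _ _ => trivial⟩, ?_⟩
  apply ext'
  intro x
  constructor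
  · rintro ⟨k, hk, rfl⟩; exact hk
  · intro hx
    obtain ⟨k, rfl⟩ := mem_A.1 (h hx)
    exact ⟨k, hx, rfl⟩

theorem e_sub {H : NumMonoid} {a : ℕ} {ha : a ∈ H.carrier} (X : P0 NN) :
    (e a ha X).1 ⊆ (A a ha).1 := by
  rintro x ⟨k, _, rfl⟩
  exact mem_A.2 ⟨k, rfl⟩

theorem f_e {H : NumMonoid} (f : P0 H ≃+ P0 H) {a b : ℕ} {ha : a ∈ H.carrier}
    {hb : b ∈ H.carrier} (ha0 : a ≠ 0) (hb0 : b ≠ 0) (h : f (A a ha) = A b hb) (X : P0 NN) :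
    f (e a ha X) = e b hb X := by
  have h1 : ∀ X, ∃ Y, e b hb Y = f (e a ha X) := by
    intro X
    apply sub_A
    rw [← h, sub_iff f (A_idem _ _)]
    exact e_sub X
  choose g hg using h1
  let G : P0 NN →ₙ+ P0 NN := ⟨g, by
    intro X Y
    apply e_inj hb hb0
    rw [hg, e_add, e_add, map_add, hg, hg]⟩
  have hG : Function.Bijective G := by
    constructor
    · intro X Y hXY
      apply e_inj ha ha0
      apply f.injective
      rw [← hg, ← hg]
      exact congrArg _ hXY
    · intro Y
      have : ∃ X, e a ha X = f.symm (e b hb Y) := by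
        apply sub_A
        rw [← sub_iff f (A_idem _ _), h, f.apply_symm_apply]
        exact e_sub Y
      obtain ⟨X, hX⟩ := this
      refine ⟨X, ?_⟩
      apply e_inj hb hb0
      change e b hb (g X) = _
      rw [hg, hX, f.apply_symm_apply]
  have := NN_id (AddEquiv.ofBijective G hG) X
  have h2 : g X = X := this
  rw [← hg, h2]

theorem A_mul {H : NumMonoid} {a : ℕ} (ha : a ∈ H.carrier) (k : ℕ) :
    A (a * k) (mul_mem' ha k) = e a ha (A (H := NN) k trivial) := by
  apply ext'
  intro x
  rw [mem_A]
  constructor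
  · rintro ⟨l, rfl⟩
    exact ⟨k * l, mem_A.2 ⟨l, rfl⟩, (mul_assoc _ _ _).symm⟩
  · rintro ⟨y, hy, rfl⟩
    obtain ⟨l, rfl⟩ := mem_A.1 hy
    exact ⟨l, mul_assoc _ _ _⟩

theorem A_inj {H : NumMonoid} {a b : ℕ} {ha : a ∈ H.carrier} {hb : b ∈ H.carrier}
    (h : A a ha = A b hb) : a = b := by
  have h1 : a ∈ (A b hb).1 := by rw [← h]; exact mem_A.2 ⟨1, mul_one a⟩
  have h2 : b ∈ (A a ha).1 := by rw [h]; exact mem_A.2 ⟨1, mul_one b⟩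
  obtain ⟨k, hk⟩ := mem_A.1 h1
  obtain ⟨l, hl⟩ := mem_A.1 h2
  exact Nat.dvd_antisymm ⟨l, hl.symm⟩ ⟨k, hk.symm⟩

theorem irred {H : NumMonoid} {a : ℕ} {ha : a ∈ H.carrier} (B C : P0 H)
    (hB : B + B = B) (hC : C + C = C) (h : B + C = A a ha) : B = A a ha ∨ C = A a ha := by
  have haBC : a ∈ (B + C).1 := by rw [h]; exact mem_A.2 ⟨1, mul_one a⟩
  have hBs : B.1 ⊆ (A a ha).1 := by rw [← h]; exact left_sub _ _
  have hCs : C.1 ⊆ (A a ha).1 := by rw [← h]; exact right_sub _ _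
  obtain ⟨b, hb, c, hc, hbc⟩ := mem_add'.1 haBC
  obtain ⟨k, rfl⟩ := mem_A.1 (hBs hb)
  obtain ⟨l, rfl⟩ := mem_A.1 (hCs hc)
  have : a ∈ B.1 ∨ a ∈ C.1 := by
    rcases Nat.eq_zero_or_pos k with rfl | hk
    · right
      simp only [mul_zero, zero_add] at hbc
      rwa [hbc] at hc
    · left
      have : a ≤ a * k := Nat.le_mul_of_pos_right a hk
      have : a * k = a := by omega
      rwa [this] at hb
  rcases this with h | h
  · left
    exact ext' fun x => ⟨fun hx => hBs hx, fun hx => (A_sub hB).2 h hx⟩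
  · right
    exact ext' fun x => ⟨fun hx => hCs hx, fun hx => (A_sub hC).2 h hx⟩

theorem principal {H : NumMonoid} (f : P0 H ≃+ P0 H) {a : ℕ} (ha : a ∈ H.carrier) (ha0 : a ≠ 0) :
    ∃ b, ∃ hb : b ∈ H.carrier, b ≠ 0 ∧ f (A a ha) = A b hb := by
  have hid := idem_map f (A_idem a ha)
  have hirr : ∀ B C : P0 H, B + B = B → C + C = C → B + C = f (A a ha) →
      B = f (A a ha) ∨ C = f (A a ha) := by
    intro B C hB hC h
    obtain ⟨B, rfl⟩ := f.surjective B
    obtain ⟨C, rfl⟩ := f.surjective C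
    rw [← map_add, f.injective.eq_iff] at hB hC h
    rw [f.injective.eq_iff, f.injective.eq_iff]
    exact irred B C hB hC h
  have hne : ∃ b, b ∈ (f (A a ha)).1 ∧ b ≠ 0 := by
    by_contra hcon
    push Not at hcon
    have h1 : (f (A a ha)).1 ⊆ (f (A 0 H.zero_mem)).1 := by
      intro x hx
      rw [hcon x hx]
      exact (f _).2.1
    rw [sub_iff f (A_idem _ _), A_sub (A_idem _ _), mem_A] at h1
    obtain ⟨k, hk⟩ := h1
    rw [zero_mul] at hk
    exact ha0 hk.symm
  generalize f (A a ha) = T at *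
  classical
  have hb := Nat.find_spec hne
  have hmin := fun n => Nat.find_min' (m := n) hne
  generalize Nat.find hne = b at *
  refine ⟨b, T.2.2 hb.1, hb.2, ?_⟩
  have := hirr (A b (T.2.2 hb.1))
    ⟨{x | x ∈ T.1 ∧ x ≠ b}, ⟨T.2.1, Ne.symm hb.2⟩, fun x hx => T.2.2 hx.1⟩ (A_idem _ _) ?_ ?_
  · rcases this with h | h
    · exact h.symm
    · exfalso
      have h2 := hb.1
      rw [← h] at h2
      exact h2.2 rfl
  · apply idem_of
    rintro x ⟨hx, hxb⟩ y ⟨hy, hyb⟩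
    refine ⟨?_, ?_⟩
    · rw [← hid]; exact ⟨x, hx, y, hy, rfl⟩
    · intro hxy
      by_cases hx0 : x = 0
      · omega
      · by_cases hy0 : y = 0
        · omega
        · have := hmin x ⟨hx, hx0⟩
          omega
  · apply ext'
    intro x
    constructor
    · rintro ⟨u, hu, v, hv, rfl⟩
      rw [← hid]
      exact ⟨u, (A_sub hid).2 hb.1 hu, v, hv.1, rfl⟩
    · intro hx
      by_cases hxb : x = b
      · exact left_sub _ _ (mem_A.2 ⟨1, by omega⟩)
      · exact right_sub _ _ ⟨hx, hxb⟩

theorem cross {H : NumMonoid} (f : P0 H ≃+ P0 H) {a b c d : ℕ} {ha : a ∈ H.carrier}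
    {hb : b ∈ H.carrier} {hc : c ∈ H.carrier} {hd : d ∈ H.carrier}
    (ha0 : a ≠ 0) (hb0 : b ≠ 0) (hc0 : c ≠ 0) (hd0 : d ≠ 0)
    (h : f (A a ha) = A b hb) (h' : f (A c hc) = A d hd) : b * c = d * a := by
  have h1 : f (A (a * c) (mul_mem' ha c)) = A (b * c) (mul_mem' hb c) := by
    rw [A_mul ha, A_mul hb]; exact f_e f ha0 hb0 h _
  have h2 : f (A (c * a) (mul_mem' hc a)) = A (d * a) (mul_mem' hd a) := by
    rw [A_mul hc, A_mul hd]; exact f_e f hc0 hd0 h' _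
  have h3 : A (a * c) (mul_mem' ha c) = A (c * a) (mul_mem' hc a) := by
    congr 1
    exact mul_comm a c
  rw [h3, h2] at h1
  exact (A_inj h1).symm

theorem le_of {H : NumMonoid} (f : P0 H ≃+ P0 H) {a b : ℕ} {ha : a ∈ H.carrier}
    {hb : b ∈ H.carrier} (ha0 : a ≠ 0) (hb0 : b ≠ 0) (h : f (A a ha) = A b hb) : a ≤ b := by
  classical
  have hne : ∃ m, m ∈ H.carrier ∧ m ≠ 0 := ⟨a, ha, ha0⟩
  have hm := Nat.find_spec hne
  have hmin := fun n => Nat.find_min' (m := n) hne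
  generalize Nat.find hne = m at *
  obtain ⟨d, hd, hd0, hfd⟩ := principal f hm.1 hm.2
  have h1 := cross f ha0 hb0 hm.2 hd0 h hfd
  have h2 := hmin d ⟨hd, hd0⟩
  have hmpos := Nat.pos_of_ne_zero hm.2
  by_contra hcon
  push Not at hcon
  nlinarith

theorem A_fix {H : NumMonoid} (f : P0 H ≃+ P0 H) {a : ℕ} (ha : a ∈ H.carrier) (ha0 : a ≠ 0) :
    f (A a ha) = A a ha := by
  obtain ⟨b, hb, hb0, h⟩ := principal f ha ha0
  have h1 := le_of f ha0 hb0 h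
  have h2 : b ≤ a := le_of (ha := hb) (hb := ha) f.symm hb0 ha0
    (by rw [← h, f.symm_apply_apply])
  obtain rfl : a = b := le_antisymm h1 h2
  exact h

theorem S_fix {H : NumMonoid} (f : P0 H ≃+ P0 H) (m : ℕ) : f (S H m) = S H m := by
  apply ext'
  intro a
  by_cases ha0 : a = 0
  · subst ha0
    exact ⟨fun _ => (S H m).2.1, fun _ => (f (S H m)).2.1⟩
  by_cases ha : a ∈ H.carrier
  · rw [← A_sub (ha := ha) (S_idem H m), ← A_sub (ha := ha) (idem_map f (S_idem H m)),
      ← sub_iff f (A := A a ha) (S_idem H m), A_fix f ha ha0]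
  · exact ⟨fun h => absurd ((f _).2.2 h) ha, fun h => absurd ((S H m).2.2 h) ha⟩

end PZ

/-- The automorphism group of the reduced large power monoid of a numerical
monoid is trivial. -/
theorem stmt11 (H : NumMonoid) (f : P0 H ≃+ P0 H) : ∀ X : P0 H, f X = X :=
  PZ.eq_id_of_S f (PZ.S_fix f)
end
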